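/- For every m ≥ 2, the number of reverse-alternating (down-up) permutations of length 2m containing the pattern 321 exactly once equals the number of alternating (up-down) permutations of length 2m containing 123 exactly once, namely 10·(2m)! / ((m-2)!(m+3)!). -/

import Mathlib

/-- `w` is an alternating (up-down) permutation: `w 0 < w 1 > w 2 < ⋯`. -/
def UpDown {n : ℕ} (w : Equiv.Perm (Fin n)) : Prop :=
  ∀ i : ℕ, ∀ h : i + 1 < n,
    if i % 2 = 0 then w ⟨i, Nat.lt_of_succ_lt h⟩ < w ⟨i + 1, h⟩
    else w ⟨i + 1, h⟩ < w ⟨i, Nat.lt_of_succ_lt h⟩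

/-- `w` is a reverse-alternating (down-up) permutation: `w 0 > w 1 < w 2 > ⋯`. -/
def DownUp {n : ℕ} (w : Equiv.Perm (Fin n)) : Prop :=
  ∀ i : ℕ, ∀ h : i + 1 < n,
    if i % 2 = 0 then w ⟨i + 1, h⟩ < w ⟨i, Nat.lt_of_succ_lt h⟩
    else w ⟨i, Nat.lt_of_succ_lt h⟩ < w ⟨i + 1, h⟩

/-- The set of occurrences of the pattern 321 in `w`. -/
def occ321 {n : ℕ} (w : Equiv.Perm (Fin n)) : Set (Fin n × Fin n × Fin n) :=
  {t | t.1 < t.2.1 ∧ t.2.1 < t.2.2 ∧ w t.2.2 < w t.2.1 ∧ w t.2.1 < w t.1}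

/-- The set of occurrences of the pattern 123 in `w`. -/
def occ123 {n : ℕ} (w : Equiv.Perm (Fin n)) : Set (Fin n × Fin n × Fin n) :=
  {t | t.1 < t.2.1 ∧ t.2.1 < t.2.2 ∧ w t.1 < w t.2.1 ∧ w t.2.1 < w t.2.2}

/-! Among the down-up permutations of even length the 321-avoiding ones are those that increase
along the even positions and along the odd positions. Such a permutation is determined by the set of
its values at the even positions, and these sets are the down-step sets of the ballot paths that
return to height `0`. Positions and values are counted from `0`.

Suppose that a down-up permutation has a single 321 and that its middle entry is at an even
position `j`. Then the 321 occupies the positions `j - 2`, `j`, `j + 1`, and swapping the entries at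
`j - 2` and `j` gives a 321-avoiding permutation whose value at `j - 2` is `j`. In terms of paths
this value is a down-step from height `2` to height `1`, and every such down-step arises in this
way. The down-steps from height `2`, summed over all paths of length `2 * m`, are as many as the
ballot paths ending at height `4`, that is `5 * (2 * m)! / ((m - 2)! * (m + 3)!)`.

Reversing and complementing exchanges even and odd middle positions, whence the factor
`10 = 2 * 5`. -/

open Finset Equiv

section Ballot

theorem count_mem_insert_of_le {n v : ℕ} (A : Finset ℕ) (hv : v ≤ n) :
    Nat.count (· ∈ insert n A) v = Nat.count (· ∈ A) v := by
  simp only [Nat.count_eq_card_filter_range]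
  congr 1
  refine filter_congr fun x hx => ?_
  have : x ≠ n := by grind
  simp [this]

theorem count_mem_eq_card {n : ℕ} {A : Finset ℕ} (hA : A ⊆ range n) :
    Nat.count (· ∈ A) n = #A := by
  rw [Nat.count_eq_card_filter_range, filter_mem_eq_inter, inter_eq_right.2 hA]

theorem count_mem_add_count_notMem (A : Finset ℕ) (v : ℕ) :
    Nat.count (· ∈ A) v + Nat.count (· ∉ A) v = v := by
  rw [Nat.count_eq_card_filter_range, Nat.count_eq_card_filter_range,
    card_filter_add_card_filter_not, card_range]

/-- `A` is the set of times of the down-steps of a lattice path with steps `±1` that starts at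
height `0` and never goes below it. The height before the step at time `v` is
`v - 2 * Nat.count (· ∈ A) v`. -/
def IsBallot (A : Finset ℕ) : Prop :=
  ∀ v ∈ A, 2 * Nat.count (· ∈ A) v < v

instance : DecidablePred IsBallot :=
  fun A => inferInstanceAs (Decidable (∀ v ∈ A, 2 * Nat.count (· ∈ A) v < v))

theorem IsBallot.two_mul_count_le {A : Finset ℕ} (hA : IsBallot A) (v : ℕ) :
    2 * Nat.count (· ∈ A) v ≤ v := by
  induction v with
  | zero => simp
  | succ v ih =>
    have := hA v
    grind

theorem isBallot_insert_iff {n : ℕ} {A : Finset ℕ} (hA : A ⊆ range n) :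
    IsBallot (insert n A) ↔ IsBallot A ∧ 2 * #A < n := by
  have hcount : ∀ v ∈ A, Nat.count (· ∈ insert n A) v = Nat.count (· ∈ A) v := fun v hv =>
    count_mem_insert_of_le A (mem_range.1 (hA hv)).le
  unfold IsBallot
  rw [forall_mem_insert, count_mem_insert_of_le A le_rfl, count_mem_eq_card hA, and_comm]
  exact and_congr_left' (forall₂_congr fun v hv => by rw [hcount v hv])

/-- The ballot paths with `n` steps that end at height `h`, encoded by `IsBallot`. -/
def ballotSets (n h : ℕ) : Finset (Finset ℕ) :=
  {A ∈ (range n).powerset | IsBallot A ∧ 2 * #A + h = n}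

theorem mem_ballotSets {n h : ℕ} {A : Finset ℕ} :
    A ∈ ballotSets n h ↔ A ⊆ range n ∧ IsBallot A ∧ 2 * #A + h = n := by
  simp [ballotSets]

theorem sum_ballotSets_succ_zero {M : Type*} [AddCommMonoid M] (n : ℕ) (f : Finset ℕ → M) :
    ∑ A ∈ ballotSets (n + 1) 0, f A = ∑ A ∈ ballotSets n 1, f (insert n A) := by
  simp only [ballotSets, sum_filter]
  rw [range_add_one, sum_powerset_insert (by simp), sum_eq_zero, zero_add]
  · refine sum_congr rfl fun A hA => ?_
    have hn : n ∉ A := fun h => by simpa using mem_powerset.1 hA h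
    refine if_congr ?_ rfl rfl
    rw [isBallot_insert_iff (mem_powerset.1 hA), card_insert_of_notMem hn]
    grind
  · intro A hA
    refine if_neg ?_
    rintro ⟨hballot, hcard⟩
    have := hballot.two_mul_count_le n
    rw [count_mem_eq_card (mem_powerset.1 hA)] at this
    omega

theorem sum_ballotSets_succ_succ {M : Type*} [AddCommMonoid M] (n h : ℕ) (f : Finset ℕ → M) :
    ∑ A ∈ ballotSets (n + 1) (h + 1), f A =
      ∑ A ∈ ballotSets n h, f A + ∑ A ∈ ballotSets n (h + 2), f (insert n A) := by
  simp only [ballotSets, sum_filter]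
  rw [range_add_one, sum_powerset_insert (by simp)]
  congr 1 <;> refine sum_congr rfl fun A hA => if_congr ?_ rfl rfl
  · grind
  · have hn : n ∉ A := fun h => by simpa using mem_powerset.1 hA h
    rw [isBallot_insert_iff (mem_powerset.1 hA), card_insert_of_notMem hn]
    grind

/-- The ballot number: how many ballot paths with `n` steps end at height `h`. -/
def ballotNumber (n h : ℕ) : ℕ := #(ballotSets n h)

theorem ballotNumber_zero (h : ℕ) : ballotNumber 0 h = if h = 0 then 1 else 0 := by
  rcases h with _ | h <;> simp [ballotNumber, ballotSets, IsBallot, filter_singleton]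

theorem ballotNumber_succ_zero (n : ℕ) : ballotNumber (n + 1) 0 = ballotNumber n 1 := by
  simp only [ballotNumber, card_eq_sum_ones, sum_ballotSets_succ_zero]

theorem ballotNumber_succ_succ (n h : ℕ) :
    ballotNumber (n + 1) (h + 1) = ballotNumber n h + ballotNumber n (h + 2) := by
  simp only [ballotNumber, card_eq_sum_ones, sum_ballotSets_succ_succ]

theorem ballotNumber_eq_zero_of_lt {n h : ℕ} (hnh : n < h) : ballotNumber n h = 0 := by
  rw [ballotNumber, card_eq_zero, eq_empty_iff_forall_notMem]
  intro A hA
  have := (mem_ballotSets.1 hA).2.2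
  omega

open Nat in
theorem ballotNumber_mul_factorial {n k h : ℕ} (hn : 2 * k + h = n) :
    ballotNumber n h * (k ! * (k + h + 1)!) = (h + 1) * n ! := by
  induction n generalizing k h with
  | zero =>
    obtain ⟨rfl, rfl⟩ : k = 0 ∧ h = 0 := by omega
    simp [ballotNumber_zero]
  | succ n ih =>
    rcases h with _ | h
    · obtain ⟨k, rfl⟩ : ∃ j, k = j + 1 := ⟨k - 1, by omega⟩
      obtain rfl : n = 2 * k + 1 := by omega
      rw [ballotNumber_succ_zero, factorial_succ k, factorial_succ (2 * k + 1)]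
      linear_combination (k + 1) * ih (k := k) (h := 1) rfl
    · rw [ballotNumber_succ_succ]
      have ih_up := ih (k := k) (h := h) (by omega)
      rcases k with _ | k
      · obtain rfl : h = n := by omega
        rw [ballotNumber_eq_zero_of_lt (by omega : h < h + 2)]
        simp only [zero_add, factorial_zero, one_mul, factorial_succ] at ih_up ⊢
        linear_combination (h + 2) * ih_up
      · obtain rfl : n = 2 * k + 2 + h := by omega
        have ih_down := ih (k := k) (h := h + 2) (by omega)
        have hfact : (k + h + 3)! = (k + h + 3) * (k + h + 2)! := factorial_succ _
        rw [show k + (h + 2) + 1 = k + h + 3 by ring, hfact] at ih_down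
        rw [show k + 1 + h + 1 = k + h + 2 by ring, factorial_succ k] at ih_up
        rw [show k + 1 + (h + 1) + 1 = k + h + 3 by ring, hfact, factorial_succ k,
          factorial_succ (2 * k + 2 + h)]
        linear_combination (k + h + 3) * ih_up + (k + 1) * ih_down

/-- The down-steps from height `2` to height `1` of the path encoded by `A`; they mark the places
where a 321-avoiding permutation can be modified so as to acquire a single 321. -/
def descentsFromTwo (A : Finset ℕ) : Finset ℕ :=
  {v ∈ A | v = 2 * Nat.count (· ∈ A) v + 2}

theorem card_descentsFromTwo_insert {n h : ℕ} {A : Finset ℕ} (hA : A ∈ ballotSets n h) :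
    #(descentsFromTwo (insert n A)) = #(descentsFromTwo A) + if h = 2 then 1 else 0 := by
  obtain ⟨hsub, -, hcard⟩ := mem_ballotSets.1 hA
  have hn : n ∉ A := fun h => by simpa using hsub h
  have hold : {v ∈ A | v = 2 * Nat.count (· ∈ insert n A) v + 2} = descentsFromTwo A :=
    filter_congr fun v hv => by rw [count_mem_insert_of_le A (mem_range.1 (hsub hv)).le]
  rw [descentsFromTwo, filter_insert, hold, count_mem_insert_of_le A le_rfl,
    count_mem_eq_card hsub, apply_ite card, card_insert_of_notMem (by grind [descentsFromTwo])]
  grind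

theorem sum_descentsFromTwo_insert (n h : ℕ) :
    ∑ A ∈ ballotSets n h, #(descentsFromTwo (insert n A)) =
      ∑ A ∈ ballotSets n h, #(descentsFromTwo A) + if h = 2 then ballotNumber n h else 0 := by
  rw [sum_congr rfl fun A => card_descentsFromTwo_insert, sum_add_distrib]
  split_ifs <;> simp [ballotNumber]

theorem sum_descentsFromTwo (n : ℕ) :
    ∑ A ∈ ballotSets n 0, #(descentsFromTwo A) = ballotNumber n 4 ∧
      ∀ h, ∑ A ∈ ballotSets n (h + 1), #(descentsFromTwo A) =
        ballotNumber n (h + 3) + ballotNumber n (h + 5) := by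
  induction n with
  | zero =>
    have hzero : ∀ h, ∑ A ∈ ballotSets 0 h, #(descentsFromTwo A) = 0 := fun h =>
      sum_eq_zero fun A hA => by
        obtain rfl : A = ∅ := by simpa using (mem_ballotSets.1 hA).1
        rfl
    simp [hzero, ballotNumber_zero]
  | succ n ih =>
    obtain ⟨ih_zero, ih_succ⟩ := ih
    refine ⟨?_, fun h => ?_⟩
    · simp [sum_ballotSets_succ_zero, sum_descentsFromTwo_insert, ih_succ,
        ballotNumber_succ_succ]
    · rw [sum_ballotSets_succ_succ, sum_descentsFromTwo_insert, ih_succ, ballotNumber_succ_succ,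
        ballotNumber_succ_succ]
      rcases h with _ | h
      · rw [ih_zero]
        simp
        ring
      · rw [ih_succ, if_neg (by omega), add_zero]

end Ballot

section AdjacentSwap

variable {α β : Type*} [LinearOrder α] [LinearOrder β] {i j : α}

theorem swap_apply_lt_swap_apply {p q : α} (hij : i < j) (hp : p ≤ i ∨ j ≤ p)
    (hq : q ≤ i ∨ j ≤ q) (hpq : p < q) (hne : ¬(p = i ∧ q = j)) : swap i j p < swap i j q := by
  grind

theorem strictMonoOn_comp_swap_iff {f : α → β} (hf : Function.Injective f) {s : Set α}
    (hi : i ∈ s) (hj : j ∈ s) (hij : i < j) (hadj : ∀ p ∈ s, p ≤ i ∨ j ≤ p) :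
    StrictMonoOn (f ∘ swap i j) s ↔
      ∀ p ∈ s, ∀ q ∈ s, p < q → (f q < f p ↔ p = i ∧ q = j) := by
  have hswap : ∀ p ∈ s, swap i j p ∈ s := fun p hp => by grind
  constructor
  · intro hmono p hp q hq hpq
    refine ⟨fun hlt => ?_, ?_⟩
    · by_contra hne
      have := hmono (hswap p hp) (hswap q hq)
        (swap_apply_lt_swap_apply hij (hadj p hp) (hadj q hq) hpq hne)
      simp only [Function.comp_apply, swap_apply_self] at this
      exact this.asymm hlt
    · rintro ⟨rfl, rfl⟩
      simpa using hmono hp hq hpq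
  · intro hinv p hp q hq hpq
    by_cases hne : p = i ∧ q = j
    · obtain ⟨rfl, rfl⟩ := hne
      simpa using (hinv p hp q hq hpq).2 ⟨rfl, rfl⟩
    · have hlt := swap_apply_lt_swap_apply hij (hadj p hp) (hadj q hq) hpq hne
      refine lt_of_le_of_ne (not_lt.1 fun h => ?_) (hf.ne hlt.ne)
      have := (hinv _ (hswap p hp) _ (hswap q hq) hlt).1 h
      grind

end AdjacentSwap

section ParityMono

theorem exists_perm_strictMonoOn {α : Type*} [Finite α] [LinearOrder α] {s t : Finset α}
    (hst : #s = #t) :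
    ∃ u : Perm α, (∀ x, u x ∈ t ↔ x ∈ s) ∧ StrictMonoOn u s ∧ StrictMonoOn u (s : Set α)ᶜ := by
  cases nonempty_fintype α
  have hst' : Fintype.card {x // x ∉ s} = Fintype.card {x // x ∉ t} := by
    simp [Fintype.card_subtype_compl, hst]
  let e : {x // x ∈ s} ≃o {x // x ∈ t} :=
    (Fintype.orderIsoFinOfCardEq _ rfl).symm.trans (Fintype.orderIsoFinOfCardEq _ (by simp [hst]))
  let f : {x // x ∉ s} ≃o {x // x ∉ t} :=
    (Fintype.orderIsoFinOfCardEq _ rfl).symm.trans (Fintype.orderIsoFinOfCardEq _ hst'.symm)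
  let u : Perm α := subtypeCongr e.toEquiv f.toEquiv
  have hu_mem : ∀ x (hx : x ∈ s), u x = e ⟨x, hx⟩ := fun x hx => by simp [u, subtypeCongr, hx]
  have hu_notMem : ∀ x (hx : x ∉ s), u x = f ⟨x, hx⟩ := fun x hx => by simp [u, subtypeCongr, hx]
  refine ⟨u, fun x => ?_, fun x hx y hy hxy => ?_, fun x hx y hy hxy => ?_⟩
  · by_cases hx : x ∈ s
    · simp [hu_mem x hx, hx]
    · simpa [hu_notMem x hx, hx] using (f ⟨x, hx⟩).2
  · rw [hu_mem x hx, hu_mem y hy]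
    exact e.strictMono hxy
  · rw [hu_notMem x hx, hu_notMem y hy]
    exact f.strictMono hxy

variable {n m : ℕ}

theorem count_apply_eq_count {u : Perm (Fin n)} {P Q : ℕ → Prop} [DecidablePred P]
    [DecidablePred Q] (hPQ : ∀ p, P (u p).val ↔ Q p.val) (hu : StrictMonoOn u {p | Q p.val})
    {p : Fin n} (hp : Q p.val) : Nat.count P (u p).val = Nat.count Q p.val := by
  rw [Nat.count_eq_card_filter_range, Nat.count_eq_card_filter_range]
  symm
  refine card_bij (fun x hx => (u ⟨x, by grind⟩).val) ?_ ?_ ?_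
  · intro x hx
    obtain ⟨hxp, hQx⟩ : x < p.val ∧ Q x := by simpa using hx
    have hlt : u ⟨x, hxp.trans p.isLt⟩ < u p := hu hQx hp hxp
    simpa [hPQ, hQx] using hlt
  · intro x hx y hy hxy
    simpa using u.injective (Fin.ext hxy)
  · intro y hy
    obtain ⟨hyp, hPy⟩ : y < (u p).val ∧ P y := by simpa using hy
    obtain ⟨q, hq⟩ := u.surjective ⟨y, hyp.trans (u p).isLt⟩
    obtain rfl : (u q).val = y := congrArg Fin.val hq
    have hQq := (hPQ q).1 hPy
    exact ⟨q, by simpa [hQq] using (hu.lt_iff_lt hQq hp).1 hyp, rfl⟩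

theorem count_mod_two_eq {e : ℕ} (he : e < 2) (k : ℕ) :
    Nat.count (· % 2 = e) k = (k + 1 - e) / 2 := by
  induction k with
  | zero => simp; omega
  | succ k ih => rw [Nat.count_succ, ih]; split_ifs <;> omega

theorem card_filter_fin_val (P : ℕ → Prop) [DecidablePred P] :
    #{p : Fin n | P p.val} = Nat.count P n := by
  rw [Nat.count_eq_card_filter_range, ← Nat.Iio_eq_range, ← Fin.map_valEmbedding_univ, filter_map,
    card_map]
  rfl

/-- `u` increases along the even positions and along the odd positions. Among the down-up
permutations of even length these are the 321-avoiding ones. -/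
def ParityMono (u : Perm (Fin n)) : Prop :=
  StrictMonoOn u {p | p.val % 2 = 0} ∧ StrictMonoOn u {p | p.val % 2 = 1}

/-- The values of `u` at the even positions, which are its peaks if `u` is down-up. -/
def evenValues (u : Perm (Fin n)) : Finset ℕ :=
  ({p | p.val % 2 = 0} : Finset (Fin n)).image fun p => (u p).val

theorem mem_evenValues {u : Perm (Fin n)} {v : ℕ} :
    v ∈ evenValues u ↔ ∃ p : Fin n, p.val % 2 = 0 ∧ (u p).val = v := by
  simp [evenValues]

theorem forall_mem_evenValues {u : Perm (Fin n)} {P : ℕ → Prop} :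
    (∀ v ∈ evenValues u, P v) ↔ ∀ p : Fin n, p.val % 2 = 0 → P (u p).val := by
  simp [evenValues]

theorem apply_mem_evenValues_iff {u : Perm (Fin n)} {p : Fin n} :
    (u p).val ∈ evenValues u ↔ p.val % 2 = 0 := by
  simp [mem_evenValues, Fin.val_inj]

theorem evenValues_subset_range (u : Perm (Fin n)) : evenValues u ⊆ range n := by
  simp [evenValues, image_subset_iff]

theorem card_evenValues (u : Perm (Fin (2 * m))) : #(evenValues u) = m := by
  have hinj : Function.Injective fun p => (u p).val := Fin.val_injective.comp u.injective
  rw [evenValues, card_image_of_injective _ hinj, card_filter_fin_val (· % 2 = 0),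
    count_mod_two_eq (by omega)]
  omega

namespace ParityMono

variable {u v : Perm (Fin n)} {p q : Fin n}

theorem count_evenValues_of_even (hu : ParityMono u) (hp : p.val % 2 = 0) :
    Nat.count (· ∈ evenValues u) (u p).val = p.val / 2 := by
  rw [count_apply_eq_count (Q := (· % 2 = 0)) (fun _ => apply_mem_evenValues_iff) hu.1 hp,
    count_mod_two_eq (by omega)]
  omega

theorem count_evenValues_of_odd (hu : ParityMono u) (hp : p.val % 2 = 1) :
    Nat.count (· ∉ evenValues u) (u p).val = p.val / 2 := by
  rw [count_apply_eq_count (Q := (· % 2 = 1))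
    (fun _ => by rw [apply_mem_evenValues_iff]; omega) hu.2 hp, count_mod_two_eq (by omega)]
  omega

theorem apply_lt_apply_iff (hu : ParityMono u) (hp : p.val % 2 = 0) (hq : q.val % 2 = 1) :
    u q < u p ↔ p.val + q.val < 2 * (u p).val := by
  -- `p / 2` of the values below `u p` are at even positions, so the other `u p - p / 2` are exactly
  -- the values at the first odd positions.
  have hp_count := hu.count_evenValues_of_even hp
  have hq_count := hu.count_evenValues_of_odd hq
  have hq_mem : (u q).val ∉ evenValues u := by rw [apply_mem_evenValues_iff]; omega
  have hsum := count_mem_add_count_notMem (evenValues u) (u p).val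
  constructor
  · intro hlt
    have := Nat.count_strict_mono (p := (· ∉ evenValues u)) hq_mem hlt
    omega
  · contrapose!
    intro hle
    have := Nat.count_monotone (· ∉ evenValues u) hle
    omega

theorem eq_of_evenValues_eq (hu : ParityMono u) (hv : ParityMono v)
    (huv : evenValues u = evenValues v) : u = v := by
  ext p
  rcases Nat.mod_two_eq_zero_or_one p.val with hp | hp
  · refine Nat.count_injective (p := (· ∈ evenValues u)) ?_ ?_ ?_
    · exact apply_mem_evenValues_iff.2 hp
    · rw [huv, apply_mem_evenValues_iff, hp]
    · simp only [hu.count_evenValues_of_even hp]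
      simp only [huv, hv.count_evenValues_of_even hp]
  · refine Nat.count_injective (p := (· ∉ evenValues u)) ?_ ?_ ?_
    · rw [apply_mem_evenValues_iff]; omega
    · rw [huv, apply_mem_evenValues_iff]; omega
    · simp only [hu.count_evenValues_of_odd hp]
      simp only [huv, hv.count_evenValues_of_odd hp]

end ParityMono

theorem exists_parityMono_evenValues_eq {A : Finset ℕ} (hA : A ⊆ range (2 * m)) (hcard : #A = m) :
    ∃ u : Perm (Fin (2 * m)), ParityMono u ∧ evenValues u = A := by
  have hlt : ∀ v ∈ A, v < 2 * m := fun v hv => mem_range.1 (hA hv)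
  have hst : #{p : Fin (2 * m) | p.val % 2 = 0} = #(A.attachFin hlt) := by
    rw [card_attachFin, card_filter_fin_val (· % 2 = 0), count_mod_two_eq (by omega)]
    omega
  obtain ⟨u, hu_mem, hu_even, hu_odd⟩ := exists_perm_strictMonoOn hst
  refine ⟨u, ⟨by simpa using hu_even, hu_odd.mono fun p hp => ?_⟩, ?_⟩
  · rw [Set.mem_ofPred_eq] at hp
    simp [hp]
  · ext v
    constructor
    · intro hv
      obtain ⟨p, hp, rfl⟩ := mem_evenValues.1 hv
      exact (mem_attachFin hlt).1 ((hu_mem p).2 (by simpa using hp))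
    · intro hv
      obtain ⟨p, hp⟩ := u.surjective ⟨v, hlt v hv⟩
      have hpA : u p ∈ A.attachFin hlt := by rw [hp]; simpa using hv
      exact mem_evenValues.2 ⟨p, by simpa using (hu_mem p).1 hpA, by rw [hp]⟩

end ParityMono

section DownUp

variable {n m : ℕ}

theorem downUp_iff {w : Perm (Fin n)} :
    DownUp w ↔ ∀ p q : Fin n, q.val = p.val + 1 → (w q < w p ↔ p.val % 2 = 0) := by
  constructor
  · rintro hw p ⟨q, hq⟩ rfl
    have := hw p.val hq
    split_ifs at this with hp
    · exact iff_of_true this hp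
    · exact iff_of_false this.asymm hp
  · intro hw p hp
    have := hw ⟨p, by omega⟩ ⟨p + 1, hp⟩ rfl
    split_ifs with hp_even
    · exact this.2 hp_even
    · refine lt_of_le_of_ne (not_lt.1 (mt this.1 hp_even)) (w.injective.ne ?_)
      simp

theorem DownUp.lt_of_odd_of_lt {w : Perm (Fin (2 * m))} (hw : DownUp w)
    (hodd : StrictMonoOn w {p | p.val % 2 = 1}) {p q : Fin (2 * m)} (hp : p.val % 2 = 1)
    (hpq : p < q) : w p < w q := by
  rcases Nat.mod_two_eq_zero_or_one q.val with hq | hq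
  · let r : Fin (2 * m) := ⟨q.val + 1, by omega⟩
    have hr : r.val % 2 = 1 := by simp only [r]; omega
    have hpr : p < r := hpq.trans (Fin.lt_def.2 (by simp [r]))
    exact (hodd hp hr hpr).trans ((downUp_iff.1 hw q r rfl).2 hq)
  · exact hodd hp hq hpq

theorem ParityMono.downUp_iff {u : Perm (Fin (2 * m))} (hu : ParityMono u) :
    DownUp u ↔ ∀ p, p.val % 2 = 0 → p.val < (u p).val := by
  rw [_root_.downUp_iff]
  constructor
  · intro h p hp
    have := (h p ⟨p.val + 1, by omega⟩ rfl).2 hp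
    rw [hu.apply_lt_apply_iff hp (by simp only; omega)] at this
    simp only at this
    omega
  · intro h p q hpq
    rcases Nat.mod_two_eq_zero_or_one p.val with hp | hp
    · refine iff_of_true ?_ hp
      rw [hu.apply_lt_apply_iff hp (by omega)]
      have := h p hp
      omega
    · have hq : q.val % 2 = 0 := by omega
      refine iff_of_false (lt_asymm ?_) (by omega)
      rw [hu.apply_lt_apply_iff hq hp]
      have := h q hq
      omega

theorem ParityMono.isBallot_evenValues_iff {u : Perm (Fin (2 * m))} (hu : ParityMono u) :
    IsBallot (evenValues u) ↔ DownUp u := by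
  rw [hu.downUp_iff, IsBallot, forall_mem_evenValues]
  refine forall₂_congr fun p hp => ?_
  rw [hu.count_evenValues_of_even hp]
  omega

theorem bijOn_evenValues :
    Set.BijOn evenValues {u : Perm (Fin (2 * m)) | DownUp u ∧ ParityMono u}
      (ballotSets (2 * m) 0) := by
  refine ⟨fun u hu => ?_, fun u hu v hv => hu.2.eq_of_evenValues_eq hv.2, fun A hA => ?_⟩
  · refine mem_ballotSets.2 ⟨evenValues_subset_range u, hu.2.isBallot_evenValues_iff.2 hu.1, ?_⟩
    rw [card_evenValues, add_zero]
  · obtain ⟨hsub, hballot, hcard⟩ := mem_ballotSets.1 hA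
    obtain ⟨u, hu, rfl⟩ := exists_parityMono_evenValues_eq hsub (by omega)
    exact ⟨u, ⟨hu.isBallot_evenValues_iff.1 hballot, hu⟩, rfl⟩

end DownUp

section OneOccurrence

variable {m : ℕ}

theorem occ321_eq_singleton_iff {n : ℕ} {w : Perm (Fin n)} {i j k : Fin n} :
    occ321 w = {(i, j, k)} ↔ ∀ p q r : Fin n,
      p < q ∧ q < r ∧ w r < w q ∧ w q < w p ↔ p = i ∧ q = j ∧ r = k := by
  simp [Set.ext_iff, occ321]

theorem DownUp.mem_occ321_iff {w : Perm (Fin (2 * m))} (hw : DownUp w)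
    (hodd : StrictMonoOn w {p | p.val % 2 = 1}) {i j : Fin (2 * m)} (hi : i.val % 2 = 0)
    (hj : j.val % 2 = 0) (hij : i < j)
    (heven : ∀ p : Fin (2 * m), p.val % 2 = 0 → ∀ q : Fin (2 * m), q.val % 2 = 0 → p < q →
      (w q < w p ↔ p = i ∧ q = j)) {p q r : Fin (2 * m)} :
    (p, q, r) ∈ occ321 w ↔ p = i ∧ q = j ∧ r.val % 2 = 1 ∧ j < r ∧ w r < w j := by
  constructor
  · rintro ⟨hpq, hqr, hwrq, hwqp⟩
    have even_of_inversion : ∀ {a b : Fin (2 * m)}, a < b → w b < w a → a.val % 2 = 0 :=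
      fun {a b} hab hwba => by
        by_contra ha
        exact (hw.lt_of_odd_of_lt hodd (by omega) hab).asymm hwba
    have hq := even_of_inversion hqr hwrq
    obtain ⟨rfl, rfl⟩ := (heven p (even_of_inversion hpq hwqp) q hq hpq).1 hwqp
    refine ⟨rfl, rfl, ?_, hqr, hwrq⟩
    by_contra hr
    exact hij.ne' ((heven q hq r (by omega) hqr).1 hwrq).1
  · rintro ⟨rfl, rfl, -, hjr, hwrj⟩
    exact ⟨hij, hjr, hwrj, (heven p hi q hj hij).2 ⟨rfl, rfl⟩⟩

/-- The down-up permutations with exactly one 321, whose middle entry is at a position of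
parity `e`. -/
def oneOcc321 (m e : ℕ) : Set (Perm (Fin (2 * m))) :=
  {w | DownUp w ∧ ∃ t, occ321 w = {t} ∧ t.2.1.val % 2 = e}

/-- The 321-avoiding down-up permutations `u` with a marked even position `i` at which the value
is `i + 2`. -/
def markedAvoiders (m : ℕ) : Set (Perm (Fin (2 * m)) × Fin (2 * m)) :=
  {x | (DownUp x.1 ∧ ParityMono x.1) ∧ x.2.val % 2 = 0 ∧ (x.1 x.2).val = x.2.val + 2}

theorem bijOn_sigma_descentsFromTwo :
    Set.BijOn (fun x => (⟨evenValues x.1, (x.1 x.2).val⟩ : Σ _ : Finset ℕ, ℕ)) (markedAvoiders m)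
      ((ballotSets (2 * m) 0).sigma descentsFromTwo) := by
  refine ⟨?_, ?_, ?_⟩
  · rintro ⟨u, i⟩ ⟨hu, hi, hui⟩
    simp only [coe_sigma, Set.mem_sigma_iff, mem_coe, descentsFromTwo, mem_filter]
    refine ⟨bijOn_evenValues.mapsTo hu, apply_mem_evenValues_iff.2 hi, ?_⟩
    rw [hu.2.count_evenValues_of_even hi]
    grind
  · rintro ⟨u, i⟩ ⟨hu, -⟩ ⟨v, j⟩ ⟨hv, -⟩ huv
    simp only [Sigma.mk.injEq, heq_eq_eq] at huv
    obtain rfl := bijOn_evenValues.injOn hu hv huv.1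
    simpa [Fin.val_inj] using huv.2
  · rintro ⟨A, v⟩ hAv
    simp only [coe_sigma, Set.mem_sigma_iff, mem_coe, descentsFromTwo, mem_filter] at hAv
    obtain ⟨hA, hvA, hv⟩ := hAv
    obtain ⟨u, hu, rfl⟩ := bijOn_evenValues.surjOn hA
    obtain ⟨i, hi, rfl⟩ := mem_evenValues.1 hvA
    rw [hu.2.count_evenValues_of_even hi] at hv
    exact ⟨(u, i), ⟨hu, hi, by simp only; omega⟩, rfl⟩

theorem swap_apply_of_odd {n : ℕ} {i j p : Fin n} (hi : i.val % 2 = 0) (hj : j.val % 2 = 0)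
    (hp : p.val % 2 = 1) : swap i j p = p :=
  swap_apply_of_ne_of_ne (by grind) (by grind)

theorem parityMono_mul_swap_iff {n : ℕ} {w : Perm (Fin n)} {i j : Fin n} (hi : i.val % 2 = 0)
    (hj : j.val = i.val + 2) :
    ParityMono (w * swap i j) ↔ StrictMonoOn w {p | p.val % 2 = 1} ∧
      ∀ p : Fin n, p.val % 2 = 0 → ∀ q : Fin n, q.val % 2 = 0 → p < q →
        (w q < w p ↔ p = i ∧ q = j) := by
  have hj_even : j.val % 2 = 0 := by omega
  have hodd : Set.EqOn (w * swap i j) w {p | p.val % 2 = 1} := fun p hp => by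
    rw [Perm.mul_apply, swap_apply_of_odd hi hj_even hp]
  rw [ParityMono, hodd.congr_strictMonoOn, Perm.coe_mul, and_comm]
  refine and_congr_right' (strictMonoOn_comp_swap_iff w.injective hi hj_even ?_ fun p hp => ?_)
  · rw [Fin.lt_def]
    omega
  · rw [Set.mem_ofPred_eq] at hp
    rw [Fin.le_def, Fin.le_def]
    omega

theorem DownUp.mul_swap {u : Perm (Fin (2 * m))} (hu : DownUp u) (hmono : ParityMono u)
    {i j : Fin (2 * m)} (hi : i.val % 2 = 0) (hj : j.val = i.val + 2) (hui : u i = j) :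
    DownUp (u * swap i j) := by
  have hj_even : j.val % 2 = 0 := by omega
  have huj : i.val + 2 < (u j).val := by
    have : u i < u j := hmono.1 hi hj_even (Fin.lt_def.2 (by omega))
    rwa [hui, Fin.lt_def, hj] at this
  have hpeak : ∀ p : Fin (2 * m), p.val % 2 = 0 →
      (swap i j p).val % 2 = 0 ∧ p.val + (swap i j p).val + 1 < 2 * (u (swap i j p)).val := by
    intro p hp
    have := hmono.downUp_iff.1 hu p hp
    rw [swap_apply_def]
    split_ifs <;> grind
  have hlt : ∀ p q : Fin (2 * m), p.val % 2 = 0 → q.val % 2 = 1 → q.val ≤ p.val + 1 →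
      (u * swap i j) q < (u * swap i j) p := by
    intro p q hp hq hqp
    obtain ⟨hpar, hval⟩ := hpeak p hp
    rw [Perm.mul_apply, Perm.mul_apply, swap_apply_of_odd hi hj_even hq,
      hmono.apply_lt_apply_iff hpar hq]
    omega
  refine downUp_iff.2 fun p q hpq => ?_
  rcases Nat.mod_two_eq_zero_or_one p.val with hp | hp
  · exact iff_of_true (hlt p q hp (by omega) hpq.le) hp
  · exact iff_of_false (hlt q p (by omega) hp (by omega)).asymm (by omega)

theorem DownUp.occ321_mul_swap {u : Perm (Fin (2 * m))} (hu : DownUp u) (hmono : ParityMono u)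
    {i j k : Fin (2 * m)} (hi : i.val % 2 = 0) (hj : j.val = i.val + 2) (hk : k.val = i.val + 3)
    (hui : u i = j) : occ321 (u * swap i j) = {(i, j, k)} := by
  have hj_even : j.val % 2 = 0 := by omega
  have hij : i < j := Fin.lt_def.2 (by omega)
  obtain ⟨hodd, heven⟩ := (parityMono_mul_swap_iff (w := u * swap i j) hi hj).1 (by simpa)
  ext ⟨p, q, r⟩
  rw [(hu.mul_swap hmono hi hj hui).mem_occ321_iff hodd hi hj_even hij heven,
    Set.mem_singleton_iff, Prod.mk.injEq, Prod.mk.injEq]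
  refine and_congr_right' (and_congr_right' ?_)
  have hlt_iff : r.val % 2 = 1 → ((u * swap i j) r < (u * swap i j) j ↔ r.val < i.val + 4) :=
    fun hr => by
      rw [Perm.mul_apply, Perm.mul_apply, swap_apply_of_odd hi hj_even hr, swap_apply_right,
        hmono.apply_lt_apply_iff hi hr, hui]
      omega
  constructor
  · rintro ⟨hr, hjr, hlt⟩
    have := (hlt_iff hr).1 hlt
    exact Fin.ext (by omega)
  · rintro rfl
    exact ⟨by omega, Fin.lt_def.2 (by omega), (hlt_iff (by omega)).2 (by omega)⟩

section UniqueOccurrence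

variable {w : Perm (Fin (2 * m))} {i j k : Fin (2 * m)}

theorem DownUp.strictMonoOn_odd_of_occ321_eq (hw : DownUp w) (hocc : occ321 w = {(i, j, k)})
    (hj : j.val % 2 = 0) : StrictMonoOn w {p | p.val % 2 = 1} := by
  intro p (hp : p.val % 2 = 1) q _ hpq
  by_contra hle
  have hlt : w q < w p := lt_of_le_of_ne (not_lt.1 hle) (w.injective.ne hpq.ne')
  obtain ⟨r, hrp⟩ : ∃ r : Fin (2 * m), p.val = r.val + 1 := ⟨⟨p.val - 1, by omega⟩, by grind⟩
  obtain ⟨-, rfl, -⟩ := (occ321_eq_singleton_iff.1 hocc r p q).1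
    ⟨Fin.lt_def.2 (by omega), hpq, hlt, (downUp_iff.1 hw r p hrp).2 (by omega)⟩
  omega

theorem DownUp.even_inversion_iff_of_occ321_eq (hw : DownUp w) (hocc : occ321 w = {(i, j, k)})
    {p q : Fin (2 * m)} (hq : q.val % 2 = 0) (hpq : p < q) : w q < w p ↔ p = i ∧ q = j := by
  constructor
  · intro hlt
    let r : Fin (2 * m) := ⟨q.val + 1, by omega⟩
    obtain ⟨hpi, hqj, -⟩ := (occ321_eq_singleton_iff.1 hocc p q r).1
      ⟨hpq, Fin.lt_def.2 q.val.lt_succ_self, (downUp_iff.1 hw q r rfl).2 hq, hlt⟩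
    exact ⟨hpi, hqj⟩
  · rintro ⟨rfl, rfl⟩
    exact ((occ321_eq_singleton_iff.1 hocc p q k).2 ⟨rfl, rfl, rfl⟩).2.2.2

theorem DownUp.positions_of_occ321_eq (hw : DownUp w) (hocc : occ321 w = {(i, j, k)})
    (hj : j.val % 2 = 0) :
    i.val % 2 = 0 ∧ j.val = i.val + 2 ∧ k.val = i.val + 3 := by
  obtain ⟨hij, -, -, hwji⟩ := (occ321_eq_singleton_iff.1 hocc i j k).2 ⟨rfl, rfl, rfl⟩
  have hodd := hw.strictMonoOn_odd_of_occ321_eq hocc hj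
  have hi : i.val % 2 = 0 := by
    by_contra hi
    exact (hw.lt_of_odd_of_lt hodd (by omega) hij).asymm hwji
  have hji : j.val = i.val + 2 := by
    by_contra hne
    obtain ⟨p, hp⟩ : ∃ p : Fin (2 * m), p.val = i.val + 2 := ⟨⟨i.val + 2, by omega⟩, rfl⟩
    have hwpi := hw.even_inversion_iff_of_occ321_eq hocc (p := i) (q := p) (by omega)
      (Fin.lt_def.2 (by omega))
    have hwjp := hw.even_inversion_iff_of_occ321_eq hocc (p := p) hj (Fin.lt_def.2 (by omega))
    grind
  obtain ⟨r, hr⟩ : ∃ r : Fin (2 * m), r.val = j.val + 1 := ⟨⟨j.val + 1, by omega⟩, rfl⟩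
  obtain ⟨-, -, rfl⟩ := (occ321_eq_singleton_iff.1 hocc i j r).1
    ⟨hij, Fin.lt_def.2 (by omega), (downUp_iff.1 hw j r hr).2 hj, hwji⟩
  exact ⟨hi, hji, by omega⟩

theorem DownUp.parityMono_mul_swap_of_occ321_eq (hw : DownUp w) (hocc : occ321 w = {(i, j, k)})
    (hj : j.val % 2 = 0) : ParityMono (w * swap i j) := by
  obtain ⟨hi, hji, -⟩ := hw.positions_of_occ321_eq hocc hj
  exact (parityMono_mul_swap_iff hi hji).2 ⟨hw.strictMonoOn_odd_of_occ321_eq hocc hj,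
    fun p _ q hq => hw.even_inversion_iff_of_occ321_eq hocc hq⟩

theorem DownUp.mul_swap_of_occ321_eq (hw : DownUp w) (hocc : occ321 w = {(i, j, k)})
    (hj : j.val % 2 = 0) : DownUp (w * swap i j) := by
  obtain ⟨hi, hji, -⟩ := hw.positions_of_occ321_eq hocc hj
  obtain ⟨-, -, -, hwji⟩ := (occ321_eq_singleton_iff.1 hocc i j k).2 ⟨rfl, rfl, rfl⟩
  have hmono := hw.parityMono_mul_swap_of_occ321_eq hocc hj
  refine hmono.downUp_iff.2 fun p hp => ?_
  obtain ⟨q, hq⟩ : ∃ q : Fin (2 * m), q.val = p.val + 1 := ⟨⟨p.val + 1, by omega⟩, rfl⟩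
  have hlt : (w * swap i j) q < (w * swap i j) p := by
    have hwqp := (downUp_iff.1 hw p q hq).2 hp
    rw [Perm.mul_apply, Perm.mul_apply, swap_apply_of_odd hi hj (by omega), swap_apply_def]
    split_ifs with hpi hpj
    · subst hpi
      have := downUp_iff.1 hw q j (by omega)
      refine lt_of_le_of_ne (not_lt.1 fun h => ?_) (w.injective.ne (by grind))
      have := this.1 h
      omega
    · subst hpj
      exact hwqp.trans hwji
    · exact hwqp
  rw [hmono.apply_lt_apply_iff hp (by omega)] at hlt
  omega

theorem DownUp.mul_swap_apply_of_occ321_eq (hw : DownUp w) (hocc : occ321 w = {(i, j, k)})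
    (hj : j.val % 2 = 0) : (w * swap i j) i = j := by
  obtain ⟨hi, hji, hki⟩ := hw.positions_of_occ321_eq hocc hj
  obtain ⟨hij, hjk, hwkj, hwji⟩ := (occ321_eq_singleton_iff.1 hocc i j k).2 ⟨rfl, rfl, rfl⟩
  have hmono := hw.parityMono_mul_swap_of_occ321_eq hocc hj
  have hui : (w * swap i j) i = w j := by simp
  have hlt_iff : ∀ r : Fin (2 * m), r.val % 2 = 1 → (w r < w j ↔ i.val + r.val < 2 * (w j).val) :=
    fun r hr => by
      rw [← hui, ← hmono.apply_lt_apply_iff hi hr, Perm.mul_apply _ _ r, swap_apply_of_odd hi hj hr]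
  have hlower := (hlt_iff k (by omega)).1 hwkj
  have hupper : (w j).val < i.val + 3 := by
    by_contra hle
    obtain ⟨r, hr⟩ : ∃ r : Fin (2 * m), r.val = i.val + 5 := ⟨⟨i.val + 5, by omega⟩, rfl⟩
    obtain ⟨-, -, rfl⟩ := (occ321_eq_singleton_iff.1 hocc i j r).1
      ⟨hij, Fin.lt_def.2 (by omega), (hlt_iff r (by omega)).2 (by omega), hwji⟩
    omega
  exact Fin.ext (by omega)

end UniqueOccurrence

theorem bijOn_oneOcc321_zero :
    Set.BijOn (fun x => x.1 * swap x.2 (x.1 x.2)) (markedAvoiders m) (oneOcc321 m 0) := by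
  have occ_eq : ∀ {u : Perm (Fin (2 * m))} {i : Fin (2 * m)}, (u, i) ∈ markedAvoiders m →
      ∃ k, occ321 (u * swap i (u i)) = {(i, u i, k)} := by
    rintro u i ⟨hu, hi, hui⟩
    simp only at hu hi hui
    exact ⟨⟨i.val + 3, by omega⟩, hu.1.occ321_mul_swap hu.2 hi hui rfl rfl⟩
  refine ⟨?_, ?_, ?_⟩
  · rintro ⟨u, i⟩ hui
    obtain ⟨k, hk⟩ := occ_eq hui
    obtain ⟨hu, hi, hj⟩ := hui
    exact ⟨hu.1.mul_swap hu.2 hi hj rfl, _, hk, by simp only at hi hj ⊢; omega⟩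
  · rintro ⟨u, i⟩ hui ⟨v, j⟩ hvj (huv : u * swap i (u i) = v * swap j (v j))
    obtain ⟨k, hk⟩ := occ_eq hui
    obtain ⟨l, hl⟩ := occ_eq hvj
    rw [huv, hl, Set.singleton_eq_singleton_iff, Prod.mk.injEq, Prod.mk.injEq] at hk
    obtain ⟨rfl, hval, -⟩ := hk
    rw [hval] at huv
    rw [mul_right_cancel huv]
  · rintro w ⟨hw, ⟨i, j, k⟩, hocc, hj⟩
    have hij := hw.mul_swap_apply_of_occ321_eq hocc hj
    obtain ⟨hi, hji, -⟩ := hw.positions_of_occ321_eq hocc hj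
    refine ⟨(w * swap i j, i), ⟨⟨hw.mul_swap_of_occ321_eq hocc hj,
      hw.parityMono_mul_swap_of_occ321_eq hocc hj⟩, hi, by simp only [hij, hji]⟩, ?_⟩
    simp only [hij, mul_swap_mul_self]

theorem ncard_oneOcc321_zero (m : ℕ) : (oneOcc321 m 0).ncard = ballotNumber (2 * m) 4 := by
  rw [← bijOn_oneOcc321_zero.ncard_eq, bijOn_sigma_descentsFromTwo.ncard_eq,
    Set.ncard_coe_finset, card_sigma, (sum_descentsFromTwo _).1]

theorem occ321_permCongr_rev {n : ℕ} (w : Perm (Fin n)) :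
    occ321 (Fin.revPerm.permCongr w) =
      (fun t => (t.2.2.rev, t.2.1.rev, t.1.rev)) ⁻¹' occ321 w := by
  ext ⟨p, q, r⟩
  simp only [occ321, Set.mem_ofPred_eq, Set.mem_preimage, permCongr_apply, Fin.revPerm_symm,
    Fin.revPerm_apply, Fin.rev_lt_rev]
  tauto

theorem DownUp.permCongr_rev {w : Perm (Fin (2 * m))} (hw : DownUp w) :
    DownUp (Fin.revPerm.permCongr w) := by
  refine downUp_iff.2 fun p q hpq => ?_
  have := downUp_iff.1 hw q.rev p.rev (by simp only [Fin.val_rev]; omega)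
  simp only [permCongr_apply, Fin.revPerm_symm, Fin.revPerm_apply, Fin.rev_lt_rev]
  rw [this, Fin.val_rev]
  omega

theorem permCongr_rev_mem_oneOcc321 {w : Perm (Fin (2 * m))} {e : ℕ} (hw : w ∈ oneOcc321 m e) :
    Fin.revPerm.permCongr w ∈ oneOcc321 m (1 - e) := by
  obtain ⟨hdown, ⟨i, j, k⟩, hocc, hj⟩ := hw
  refine ⟨hdown.permCongr_rev, (k.rev, j.rev, i.rev), ?_, ?_⟩
  · rw [occ321_permCongr_rev, hocc]
    ext ⟨p, q, r⟩
    simp [Fin.rev_eq_iff, and_comm, and_assoc]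
  · simp only [Fin.val_rev] at hj ⊢
    omega

theorem ncard_oneOcc321_one (m : ℕ) : (oneOcc321 m 1).ncard = (oneOcc321 m 0).ncard := by
  have hinv : Function.Involutive (Fin.revPerm (n := 2 * m)).permCongr := fun w => by
    ext; simp
  exact (Set.InvOn.bijOn ⟨fun w _ => hinv w, fun w _ => hinv w⟩
    (fun w => permCongr_rev_mem_oneOcc321) (fun w => permCongr_rev_mem_oneOcc321)).ncard_eq

theorem card_downUp_ncard_occ321_eq_one (m : ℕ) :
    Nat.card {w : Perm (Fin (2 * m)) // DownUp w ∧ (occ321 w).ncard = 1} =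
      2 * ballotNumber (2 * m) 4 := by
  have hunion : {w : Perm (Fin (2 * m)) | DownUp w ∧ (occ321 w).ncard = 1} =
      oneOcc321 m 0 ∪ oneOcc321 m 1 := by
    ext w
    simp only [oneOcc321, Set.ncard_eq_one, Set.mem_ofPred_eq, Set.mem_union, ← and_or_left,
      ← exists_or, Nat.mod_two_eq_zero_or_one, and_true]
  have hdisj : Disjoint (oneOcc321 m 0) (oneOcc321 m 1) := by
    rw [Set.disjoint_left]
    rintro w ⟨-, t, ht, ht_even⟩ ⟨-, s, hs, hs_odd⟩
    rw [ht, Set.singleton_eq_singleton_iff] at hs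
    subst hs
    omega
  rw [← Set.coe_ofPred, Nat.card_coe_set_eq, hunion, Set.ncard_union_eq hdisj,
    ncard_oneOcc321_one, ncard_oneOcc321_zero, ← two_mul]

theorem card_downUp_occ321_eq_card_upDown_occ123 (n : ℕ) :
    Nat.card {w : Perm (Fin n) // DownUp w ∧ (occ321 w).ncard = 1} =
      Nat.card {w : Perm (Fin n) // UpDown w ∧ (occ123 w).ncard = 1} := by
  refine Nat.card_congr (subtypeEquiv (Equiv.mulLeft Fin.revPerm) fun w => and_congr ?_ ?_)
  · simp [DownUp, UpDown]
  · have hocc : occ123 (Fin.revPerm * w) = occ321 w := by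
      ext
      simp [occ123, occ321, and_comm]
    rw [coe_mulLeft, hocc]

end OneOccurrence

theorem stmt17 (m : ℕ) (hm : 2 ≤ m) :
    Nat.card {w : Equiv.Perm (Fin (2 * m)) // DownUp w ∧ (occ321 w).ncard = 1} =
      Nat.card {w : Equiv.Perm (Fin (2 * m)) // UpDown w ∧ (occ123 w).ncard = 1} ∧
    Nat.card {w : Equiv.Perm (Fin (2 * m)) // DownUp w ∧ (occ321 w).ncard = 1} *
        (Nat.factorial (m - 2) * Nat.factorial (m + 3)) =
      10 * Nat.factorial (2 * m) := by
  refine ⟨card_downUp_occ321_eq_card_upDown_occ123 (2 * m), ?_⟩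
  have hballot := ballotNumber_mul_factorial (n := 2 * m) (k := m - 2) (h := 4) (by omega)
  rw [show m - 2 + 4 + 1 = m + 3 by omega] at hballot
  rw [card_downUp_ncard_occ321_eq_one]
  linear_combination 2 * hballot
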